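/- Let n, r ≥ 1, let Φ : (Fin r → Matrix (Fin n) (Fin n) ℝ) → ℝ be continuously differentiable, and let g_i : ℝ → Matrix (Fin n) (Fin n) ℝ (i = 1,…,r) be continuously differentiable curves taking values in invertible matrices with ġ_i(t) = ξ_i(t) * g_i(t) for continuous ξ_i. Then Φ(g_1(t),…,g_r(t)) = 0 for all t ∈ ℝ if and only if Φ(g_1(0),…,g_r(0)) = 0 and, for every t, Σ_{i=1}^{r} ⟨ Ad*_{g_i(t)^{-1}} ( g_i(t)ᵀ * ∇_iΦ(g(t)) ), ξ_i(t) ⟩_F = 0. That is, the admissible velocities allowing feasible motion are exactly those annihilated by the co-Adjoint translates of the left-trivialized differentials of the constraint. -/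

import Mathlib

open scoped Matrix

attribute [local instance] Matrix.frobeniusNormedAddCommGroup Matrix.frobeniusNormedSpace

/-- The Frobenius inner product `⟨A, B⟩_F = trace (Aᵀ * B)`. -/
noncomputable def frobInner {n : ℕ} (A B : Matrix (Fin n) (Fin n) ℝ) : ℝ :=
  (Aᵀ * B).trace

/-- The co-Adjoint action `Ad*_{g⁻¹} μ = (gᵀ)⁻¹ * μ * gᵀ` on a matrix Lie group. -/
noncomputable def coAd {n : ℕ} (g μ : Matrix (Fin n) (Fin n) ℝ) :
    Matrix (Fin n) (Fin n) ℝ :=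
  (gᵀ)⁻¹ * μ * gᵀ

theorem forall_eq_iff_of_hasDerivAt {𝕜 : Type*} [RCLike 𝕜]
    {F : Type*} [NormedAddCommGroup F] [NormedSpace 𝕜 F] {f f' : 𝕜 → F}
    (hf : ∀ t, HasDerivAt f (f' t) t) (t₀ : 𝕜) (c : F) :
    (∀ t, f t = c) ↔ f t₀ = c ∧ ∀ t, f' t = 0 := by
  constructor
  · intro hconst
    obtain rfl : f = fun _ => c := funext hconst
    exact ⟨rfl, fun t => (hf t).unique (hasDerivAt_const t c)⟩
  · rintro ⟨hinit, hzero⟩ t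
    have hdiff : Differentiable 𝕜 f := fun s => (hf s).differentiableAt
    have hderiv : ∀ s, deriv f s = 0 := fun s => (hf s).deriv.trans (hzero s)
    exact (is_const_of_deriv_eq_zero hdiff hderiv t t₀).trans hinit

theorem hasDerivAt_comp_pi {𝕜 : Type*} [NontriviallyNormedField 𝕜]
    {ι : Type*} [Fintype ι] [DecidableEq ι]
    {E : ι → Type*} [∀ i, NormedAddCommGroup (E i)] [∀ i, NormedSpace 𝕜 (E i)]
    {F : Type*} [NormedAddCommGroup F] [NormedSpace 𝕜 F]
    {f : (∀ i, E i) → F} {f' : (∀ i, E i) →L[𝕜] F} {g : ∀ i, 𝕜 → E i} {g' : ∀ i, E i} {t : 𝕜}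
    (hf : HasFDerivAt f f' fun i => g i t) (hg : ∀ i, HasDerivAt (g i) (g' i) t) :
    HasDerivAt (fun s => f fun i => g i s) (∑ i, f' (Pi.single i (g' i))) t := by
  rw [← map_sum, Finset.univ_sum_single]
  exact hf.comp_hasDerivAt t (hasDerivAt_pi.mpr hg)

theorem frobInner_mul_transpose_left {n : ℕ} (A g ξ : Matrix (Fin n) (Fin n) ℝ) :
    frobInner (A * gᵀ) ξ = frobInner A (ξ * g) := by
  rw [frobInner, frobInner, Matrix.transpose_mul, Matrix.transpose_transpose,
    Matrix.mul_assoc, Matrix.trace_mul_comm, Matrix.mul_assoc]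

/-- The co-Adjoint action turns the left-trivialized differential into the right-trivialized one,
which is what the velocity `ξ` in `ġ = ξ * g` pairs with. -/
theorem coAd_transpose_mul {n : ℕ} {g : Matrix (Fin n) (Fin n) ℝ} (hg : IsUnit g)
    (A : Matrix (Fin n) (Fin n) ℝ) :
    coAd g (gᵀ * A) = A * gᵀ := by
  have hdet : IsUnit gᵀ.det :=
    Matrix.isUnit_det_transpose g ((Matrix.isUnit_iff_isUnit_det g).mp hg)
  rw [coAd, Matrix.nonsing_inv_mul_cancel_left _ _ hdet]

section HeterogeneousAgents

variable {ι : Type*} [Fintype ι] [DecidableEq ι] {n : ι → ℕ}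
  {Φ : (∀ i, Matrix (Fin (n i)) (Fin (n i)) ℝ) → ℝ}

theorem hasDerivAt_constraint_comp
    {Φ' : (∀ i, Matrix (Fin (n i)) (Fin (n i)) ℝ) →L[ℝ] ℝ}
    {g : ∀ i, ℝ → Matrix (Fin (n i)) (Fin (n i)) ℝ}
    {ξ grad : ∀ i, Matrix (Fin (n i)) (Fin (n i)) ℝ} {t : ℝ}
    (hΦ : HasFDerivAt Φ Φ' fun i => g i t)
    (hgrad : ∀ i V, Φ' (Pi.single i V) = frobInner (grad i) V)
    (hginv : ∀ i, IsUnit (g i t))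
    (hkin : ∀ i, HasDerivAt (g i) (ξ i * g i t) t) :
    HasDerivAt (fun s => Φ fun i => g i s)
      (∑ i, frobInner (coAd (g i t) ((g i t)ᵀ * grad i)) (ξ i)) t := by
  have hpairing : ∀ i, Φ' (Pi.single i (ξ i * g i t)) =
      frobInner (coAd (g i t) ((g i t)ᵀ * grad i)) (ξ i) := fun i => by
    rw [hgrad, coAd_transpose_mul (hginv i), frobInner_mul_transpose_left]
  exact (hasDerivAt_comp_pi hΦ hkin).congr_deriv (Finset.sum_congr rfl fun i _ => hpairing i)

theorem motion_feasibility_iff_general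
    {g ξ : ∀ i, ℝ → Matrix (Fin (n i)) (Fin (n i)) ℝ}
    (hΦ : ∀ t, DifferentiableAt ℝ Φ fun i => g i t)
    (hginv : ∀ i t, IsUnit (g i t))
    (hkin : ∀ i t, HasDerivAt (g i) (ξ i t * g i t) t)
    {grad : ℝ → ∀ i, Matrix (Fin (n i)) (Fin (n i)) ℝ}
    (hgrad : ∀ t i V, fderiv ℝ Φ (fun j => g j t) (Pi.single i V) = frobInner (grad t i) V) :
    (∀ t, Φ (fun i => g i t) = 0) ↔
      (Φ (fun i => g i 0) = 0 ∧
        ∀ t, ∑ i, frobInner (coAd (g i t) ((g i t)ᵀ * grad t i)) (ξ i t) = 0) :=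
  forall_eq_iff_of_hasDerivAt
    (fun t => hasDerivAt_constraint_comp (hΦ t).hasFDerivAt (hgrad t) (fun i => hginv i t)
      fun i => hkin i t) 0 0

end HeterogeneousAgents

/-- Theorem V.4, for matrix Lie groups: a trajectory of the left-invariant kinematic
multi-agent system `ġᵢ = ξᵢ gᵢ` keeps the constraint `Φ = 0` for all time if and only
if the constraint holds initially and, at every time, the velocities `ξᵢ` are annihilated
by the co-Adjoint translates of the left-trivialized differentials `gᵢᵀ ∇ᵢΦ(g)`. -/
theorem motion_feasibility_iff (n r : ℕ) (hn : 1 ≤ n) (hr : 1 ≤ r)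
    (Φ : (Fin r → Matrix (Fin n) (Fin n) ℝ) → ℝ) (hΦ : ContDiff ℝ 1 Φ)
    (g : Fin r → ℝ → Matrix (Fin n) (Fin n) ℝ)
    (ξ : Fin r → ℝ → Matrix (Fin n) (Fin n) ℝ)
    (hgdiff : ∀ i, ContDiff ℝ 1 (g i))
    (hginv : ∀ i t, IsUnit (g i t))
    (hξcont : ∀ i, Continuous (ξ i))
    (hkin : ∀ i t, HasDerivAt (g i) (ξ i t * g i t) t)
    -- `grad t i` is the Frobenius gradient of `Φ` in its `i`-th matrix slot at the
    -- configuration `(g 1 t, …, g r t)`: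
    (grad : ℝ → Fin r → Matrix (Fin n) (Fin n) ℝ)
    (hgrad : ∀ t i V, fderiv ℝ Φ (fun j => g j t) (Pi.single i V) =
      frobInner (grad t i) V) :
    (∀ t, Φ (fun i => g i t) = 0) ↔
      (Φ (fun i => g i 0) = 0 ∧
        ∀ t, ∑ i, frobInner (coAd (g i t) ((g i t)ᵀ * grad t i)) (ξ i t) = 0) :=
  motion_feasibility_iff_general (fun _ => hΦ.differentiable one_ne_zero _) hginv hkin hgrad
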